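/- For an arbitrary prime power q and any divisor t of q−1, the graph G(q,t) has at least (1/(2t))·(q²−1)·(q−1) edges. -/

import Mathlib

/-- The scaling relation by the subgroup `H ≤ Fˣ` on nonzero pairs of field elements:
`(a₁,b₁) ∼ (a₂,b₂)` iff there is `h ∈ H` with `a₁ = h·a₂` and `b₁ = h·b₂`. -/
def Grel {F : Type} [Field F] (H : Subgroup Fˣ) (p p' : {p : F × F // p ≠ 0}) : Prop :=
  ∃ h ∈ H, p.1.1 = (h : F) * p'.1.1 ∧ p.1.2 = (h : F) * p'.1.2

/-- The vertex set of the graph `G(q,t)`: nonzero pairs modulo scaling by `H`. -/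
def GVertex (F : Type) [Field F] (H : Subgroup Fˣ) : Type :=
  Quot (Grel H)

/-- Membership of a field element in the subgroup `H ≤ Fˣ`. -/
def memH {F : Type} [Field F] (H : Subgroup Fˣ) (x : F) : Prop :=
  ∃ h ∈ H, (h : F) = x

/-- Adjacency in the graph `G(q,t)`: `⟨a,b⟩` and `⟨x,y⟩` are adjacent iff `a·x + b·y ∈ H`
(this condition is independent of the chosen representatives). -/
def GAdj {F : Type} [Field F] (H : Subgroup Fˣ) (u v : GVertex F H) : Prop :=
  ∃ p p' : {p : F × F // p ≠ 0},
    u = Quot.mk (Grel H) p ∧ v = Quot.mk (Grel H) p' ∧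
      memH H (p.1.1 * p'.1.1 + p.1.2 * p'.1.2)

/-- The edge set of the graph `G(q,t)`: unordered pairs of distinct adjacent vertices. -/
def GEdges (F : Type) [Field F] (H : Subgroup Fˣ) : Set (Sym2 (GVertex F H)) :=
  {e | ∃ u v : GVertex F H, e = s(u, v) ∧ u ≠ v ∧ GAdj H u v}

lemma Grel_equiv {F : Type} [Field F] (H : Subgroup Fˣ) : Equivalence (Grel H) where
  refl p := ⟨1, H.one_mem, by simp, by simp⟩
  symm := by
    rintro p p' ⟨h, hh, h1, h2⟩
    exact ⟨h⁻¹, H.inv_mem hh, by rw [h1]; simp, by rw [h2]; simp⟩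
  trans := by
    rintro p p' p'' ⟨h, hh, h1, h2⟩ ⟨k, hk, k1, k2⟩
    exact ⟨h * k, H.mul_mem hh hk, by rw [h1, k1]; push_cast; ring,
      by rw [h2, k2]; push_cast; ring⟩

lemma mk_eq_iff {F : Type} [Field F] (H : Subgroup Fˣ) (p p' : {p : F × F // p ≠ 0}) :
    Quot.mk (Grel H) p = Quot.mk (Grel H) p' ↔ Grel H p p' := by
  constructor
  · intro h
    exact (Grel_equiv H).eqvGen_iff.1 (Quot.eqvGen_exact h)
  · exact fun h => Quot.sound h

lemma exists_param {F : Type} [Field F] (p : {p : F × F // p ≠ 0}) :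
    ∃ g : F → {p : F × F // p ≠ 0}, Function.Injective g ∧
      ∀ s, p.1.1 * (g s).1.1 + p.1.2 * (g s).1.2 = 1 := by
  obtain ⟨⟨a, b⟩, hp⟩ := p
  have key : ∃ g : F → F × F, Function.Injective g ∧ ∀ s, a * (g s).1 + b * (g s).2 = 1 := by
    by_cases ha : a = 0
    · have hb : b ≠ 0 := by
        rintro rfl
        exact hp (by simp [ha])
      refine ⟨fun s => (s, b⁻¹), fun s s' h => ?_, fun s => ?_⟩
      · simpa using h
      · simp [ha, hb]
    · refine ⟨fun s => (a⁻¹ * (1 - b * s), s), fun s s' h => ?_, fun s => ?_⟩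
      · exact (Prod.mk.inj h).2
      · field_simp
        ring
  obtain ⟨g, hg, hs⟩ := key
  refine ⟨fun s => ⟨g s, fun h0 => ?_⟩, fun s s' h => hg (congrArg Subtype.val h), hs⟩
  have := hs s
  rw [h0] at this
  simp at this

lemma uniq_rep {F : Type} [Field F] (H : Subgroup Fˣ) (p x y : {p : F × F // p ≠ 0})
    (hx : p.1.1 * x.1.1 + p.1.2 * x.1.2 = 1) (hy : p.1.1 * y.1.1 + p.1.2 * y.1.2 = 1)
    (h : Grel H x y) : x = y := by
  obtain ⟨k, -, h1, h2⟩ := h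
  have hk : (k : F) = 1 := by
    rw [h1, h2] at hx
    linear_combination hx - (k : F) * hy
  rw [hk, one_mul] at h1 h2
  exact Subtype.ext (Prod.ext h1 h2)

/-- For an arbitrary prime power `q` and `t ∣ q−1`, the graph `G(q,t)` has at least
`(q²−1)(q−1)/(2t)` edges. -/
theorem GEdges_lower_bound {q t : ℕ} (hq : IsPrimePow q) (ht : t ∣ q - 1)
    {F : Type} [Field F] [Fintype F] (hF : Fintype.card F = q)
    (H : Subgroup Fˣ) (hH : Nat.card H = t) :
    (q ^ 2 - 1) * (q - 1) ≤ 2 * t * (GEdges F H).ncard := by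
  classical
  have hq1 := hq
  have ht1 := ht
  choose g ginj gdot using fun p : {p : F × F // p ≠ 0} => exists_param p
  have : Finite (GVertex F H) := inferInstanceAs (Finite (Quot (Grel H)))
  have hfin : (GEdges F H).Finite := Set.toFinite _
  let m : {p : F × F // p ≠ 0} → GVertex F H := Quot.mk (Grel H)
  have hm : ∀ x y, m x = m y ↔ Grel H x y := mk_eq_iff H
  have huniq : ∀ p s s', m (g p s) = m (g p s') → s = s' := fun p s s' h =>
    ginj p (uniq_rep H p _ _ (gdot p s) (gdot p s') ((hm _ _).1 h))
  let S : Finset ((_ : {p : F × F // p ≠ 0}) × F) :=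
    Finset.univ.sigma fun p => Finset.univ.filter fun s => m p ≠ m (g p s)
  have hS : (q ^ 2 - 1) * (q - 1) ≤ S.card := by
    have hcard : Fintype.card {p : F × F // p ≠ 0} = q ^ 2 - 1 := by
      rw [Fintype.card_subtype_compl, Fintype.card_subtype_eq, Fintype.card_prod, hF, sq]
    rw [Finset.card_sigma, ← hcard, ← Finset.card_univ, ← smul_eq_mul]
    refine Finset.card_nsmul_le_sum _ _ _ fun p _ => ?_
    have h1 : (Finset.univ.filter fun s => m p = m (g p s)).card ≤ 1 := by
      rw [Finset.card_le_one]
      intro s hs s' hs'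
      simp only [Finset.mem_filter, Finset.mem_univ, true_and] at hs hs'
      exact huniq p s s' (hs.symm.trans hs')
    have h2 := Finset.card_filter_add_card_filter_not (s := (Finset.univ : Finset F))
      (fun s => m p = m (g p s))
    rw [Finset.card_univ, hF] at h2
    simp only [ne_eq]
    omega
  have hA : ∀ u v : GVertex F H,
      (S.filter fun x => m x.1 = u ∧ m (g x.1 x.2) = v).card ≤ t := by
    intro u v
    obtain ⟨p0, rfl⟩ : ∃ p0, m p0 = u := Quot.exists_rep u
    have hex : ∀ p, ∃ h : H, m p = m p0 → p.1.1 = (h.1 : F) * p0.1.1 ∧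
        p.1.2 = (h.1 : F) * p0.1.2 := by
      intro p
      by_cases h : m p = m p0
      · obtain ⟨k, hk, h1⟩ := (hm _ _).1 h
        exact ⟨⟨k, hk⟩, fun _ => h1⟩
      · exact ⟨1, fun h' => absurd h' h⟩
    choose c hc using hex
    rw [← hH, Nat.card_eq_fintype_card, ← Finset.card_univ]
    refine Finset.card_le_card_of_injOn (fun x => c x.1) (fun _ _ => Finset.mem_coe.2 (Finset.mem_univ _)) ?_
    rintro ⟨p, s⟩ hx ⟨p', s'⟩ hx' heq
    simp only [Finset.coe_filter, Set.mem_setOf_eq] at hx hx' heq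
    have e1 := hc p hx.2.1
    have e2 := hc p' hx'.2.1
    rw [heq] at e1
    have hp : p = p' := Subtype.ext (Prod.ext (e1.1.trans e2.1.symm) (e1.2.trans e2.2.symm))
    subst hp
    have := huniq p s s' (hx.2.2.trans hx'.2.2.symm)
    rw [this]
  let f : ((_ : {p : F × F // p ≠ 0}) × F) → Sym2 (GVertex F H) := fun x => s(m x.1, m (g x.1 x.2))
  have hmaps : ∀ x ∈ S, f x ∈ hfin.toFinset := by
    rintro ⟨p, s⟩ hx
    rw [Set.Finite.mem_toFinset]
    have hne : m p ≠ m (g p s) := by simpa [S] using hx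
    exact ⟨m p, m (g p s), rfl, hne, p, g p s, rfl, rfl, 1, H.one_mem, by simp [gdot]⟩
  have hfib : ∀ e ∈ hfin.toFinset, (S.filter fun x => f x = e).card ≤ 2 * t := by
    intro e _
    induction e using Sym2.ind with
    | _ u v =>
      have hsub : (S.filter fun x => f x = s(u, v)) ⊆
          (S.filter fun x => m x.1 = u ∧ m (g x.1 x.2) = v) ∪
          (S.filter fun x => m x.1 = v ∧ m (g x.1 x.2) = u) := by
        intro x hx
        simp only [Finset.mem_filter, Finset.mem_union, f, Sym2.eq_iff] at hx ⊢
        tauto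
      have h1 := (Finset.card_le_card hsub).trans (Finset.card_union_le _ _)
      have h2 := hA u v
      have h3 := hA v u
      omega
  have hfinal := Finset.card_le_mul_card_image_of_maps_to hmaps (2 * t) hfib
  rw [Set.ncard_eq_toFinset_card _ hfin]
  exact hS.trans hfinal
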